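/- Let A : H₁ → H₂ and B : H₂ → H₃ be compact bounded linear operators between complex Hilbert spaces, and let p₁, p₂ > 0. If 𝒩(t,A) = O(t^{p₁}) and 𝒩(t,B) = O(t^{p₂}) as t → ∞, then 𝒩(t, B∘A) = O(t^{p}) as t → ∞, where 1/p = 1/p₁ + 1/p₂. -/

import Mathlib

open MeasureTheory Set Filter Asymptotics
open scoped ENNReal NNReal Real Topology

noncomputable section

/-- Approximation numbers (singular values) of a continuous linear map between
complex normed spaces: `s_k(A) = inf {‖A - F‖ : rank F ≤ k}`. -/
def sVal {E F : Type*} [NormedAddCommGroup E] [NormedAddCommGroup F]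
    [NormedSpace ℂ E] [NormedSpace ℂ F] (A : E →L[ℂ] F) (k : ℕ) : ℝ :=
  sInf {c : ℝ | ∃ G : E →L[ℂ] F, LinearMap.rank (G : E →ₗ[ℂ] F) ≤ (k : Cardinal) ∧ c = ‖A - G‖}

/-- Counting function of singular values: `𝒩(t, A) = #{k : s_k(A) > 1/t}`. -/
def sCount {E F : Type*} [NormedAddCommGroup E] [NormedAddCommGroup F]
    [NormedSpace ℂ E] [NormedSpace ℂ F] (A : E →L[ℂ] F) (t : ℝ) : ℕ :=
  Set.ncard {k : ℕ | 1 / t < sVal A k}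

/-!
If `S` and `T` are finite-rank approximations of `A` and `B`, then
`B A - (B S + T (A - S)) = (B - T) (A - S)`, and the subtracted operator has rank at most
`rank S + rank T`. Hence `s_{m+n}(BA) ≤ s_m(A) s_n(B)`, which in terms of counting functions reads
`𝒩(s t, BA) ≤ 𝒩(s, A) + 𝒩(t, B)`. With `1/p = 1/p₁ + 1/p₂`, the factorization
`t = t ^ (p / p₁) * t ^ (p / p₂)` balances the two terms, each being `O(t ^ p)`.
-/

lemma rank_comp_add_comp_le {R V W X : Type*} [DivisionRing R] [AddCommGroup V] [Module R V]
    [AddCommGroup W] [Module R W] [AddCommGroup X] [Module R X]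
    (f f' : V →ₗ[R] W) (g g' : W →ₗ[R] X) {m n : ℕ} (hf : f.rank ≤ m) (hg : g.rank ≤ n) :
    (g' ∘ₗ f + g ∘ₗ f').rank ≤ (m + n : ℕ) := by
  have hgf : (g' ∘ₗ f).rank ≤ m := by
    simpa only [Cardinal.lift_natCast, Cardinal.lift_le_nat_iff] using
      (LinearMap.lift_rank_comp_le_right f g').trans (Cardinal.lift_le.2 hf)
  have hgf' : (g ∘ₗ f').rank ≤ n := (LinearMap.rank_comp_le_left f' g).trans hg
  rw [Nat.cast_add]
  exact (LinearMap.rank_add_le _ _).trans (add_le_add hgf hgf')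

section ApproximationNumbers

variable {E F K : Type*} [NormedAddCommGroup E] [NormedAddCommGroup F] [NormedAddCommGroup K]
  [NormedSpace ℂ E] [NormedSpace ℂ F] [NormedSpace ℂ K]

lemma sVal_nonneg (A : E →L[ℂ] F) (k : ℕ) : 0 ≤ sVal A k := by
  refine Real.sInf_nonneg ?_
  rintro _ ⟨G, -, rfl⟩
  exact norm_nonneg _

lemma sVal_le_norm_sub (A : E →L[ℂ] F) {G : E →L[ℂ] F} {k : ℕ}
    (hG : LinearMap.rank (G : E →ₗ[ℂ] F) ≤ k) : sVal A k ≤ ‖A - G‖ := by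
  refine csInf_le ⟨0, ?_⟩ ⟨G, hG, rfl⟩
  rintro _ ⟨G', -, rfl⟩
  exact norm_nonneg _

lemma exists_rank_le_norm_sub_lt {A : E →L[ℂ] F} {k : ℕ} {c : ℝ} (hc : sVal A k < c) :
    ∃ G : E →L[ℂ] F, LinearMap.rank (G : E →ₗ[ℂ] F) ≤ k ∧ ‖A - G‖ < c := by
  have h_nonempty : {c : ℝ | ∃ G : E →L[ℂ] F,
      LinearMap.rank (G : E →ₗ[ℂ] F) ≤ k ∧ c = ‖A - G‖}.Nonempty := ⟨_, 0, by simp, rfl⟩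
  obtain ⟨_, ⟨G, hG, rfl⟩, hlt⟩ := exists_lt_of_csInf_lt h_nonempty hc
  exact ⟨G, hG, hlt⟩

lemma sVal_antitone (A : E →L[ℂ] F) : Antitone (sVal A) := by
  refine fun m n hmn => le_of_forall_gt_imp_ge_of_dense fun c hc => ?_
  obtain ⟨G, hG, hlt⟩ := exists_rank_le_norm_sub_lt hc
  exact (sVal_le_norm_sub A (hG.trans (by exact_mod_cast hmn))).trans hlt.le

lemma sVal_comp_le (A : E →L[ℂ] F) (B : F →L[ℂ] K) (m n : ℕ) :
    sVal (B.comp A) (m + n) ≤ sVal A m * sVal B n := by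
  refine le_mul_of_forall_lt₀ fun a ha b hb => ?_
  obtain ⟨S, hS, hSa⟩ := exists_rank_le_norm_sub_lt ha
  obtain ⟨T, hT, hTb⟩ := exists_rank_le_norm_sub_lt hb
  have h_factor : B.comp A - (B.comp S + T.comp (A - S)) = (B - T).comp (A - S) := by
    simp only [ContinuousLinearMap.comp_sub, ContinuousLinearMap.sub_comp]
    abel
  calc sVal (B.comp A) (m + n)
      ≤ ‖B.comp A - (B.comp S + T.comp (A - S))‖ :=
        sVal_le_norm_sub _ (rank_comp_add_comp_le (S : E →ₗ[ℂ] F) _ _ _ hS hT)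
    _ = ‖(B - T).comp (A - S)‖ := by rw [h_factor]
    _ ≤ ‖B - T‖ * ‖A - S‖ := ContinuousLinearMap.opNorm_comp_le _ _
    _ = ‖A - S‖ * ‖B - T‖ := mul_comm _ _
    _ ≤ a * b := mul_le_mul hSa.le hTb.le (norm_nonneg _) ((norm_nonneg _).trans hSa.le)

-- If `sVal A k > 1 / t` for every `k`, then `sCount A t` is the junk value `Set.ncard univ = 0`.
lemma sCount_le_iff {A : E →L[ℂ] F} {t : ℝ} (h : ∃ k, sVal A k ≤ 1 / t) {n : ℕ} :
    sCount A t ≤ n ↔ sVal A n ≤ 1 / t := by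
  have h_lower : IsLowerSet {k : ℕ | 1 / t < sVal A k} :=
    fun _ _ hle hlt => hlt.trans_le (sVal_antitone A hle)
  obtain ⟨N, hN⟩ := h_lower.eq_univ_or_Iio.resolve_left fun h_univ =>
    h.elim fun k hk => hk.not_gt ((Set.eq_univ_iff_forall.1 h_univ) k)
  have h_mem : 1 / t < sVal A n ↔ n < N := Set.ext_iff.1 hN n
  rw [sCount, hN, Set.ncard_Iio_nat, ← not_lt, ← h_mem, not_lt]

lemma sCount_comp_mul_le {A : E →L[ℂ] F} {B : F →L[ℂ] K} {s t : ℝ}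
    (hA : ∃ k, sVal A k ≤ 1 / s) (hB : ∃ k, sVal B k ≤ 1 / t) :
    sCount (B.comp A) (s * t) ≤ sCount A s + sCount B t := by
  have hA' : sVal A (sCount A s) ≤ 1 / s := (sCount_le_iff hA).1 le_rfl
  have hB' : sVal B (sCount B t) ≤ 1 / t := (sCount_le_iff hB).1 le_rfl
  have h_comp : sVal (B.comp A) (sCount A s + sCount B t) ≤ 1 / (s * t) :=
    calc sVal (B.comp A) (sCount A s + sCount B t)
        ≤ sVal A (sCount A s) * sVal B (sCount B t) := sVal_comp_le A B _ _
      _ ≤ 1 / s * (1 / t) :=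
        mul_le_mul hA' hB' (sVal_nonneg _ _) ((sVal_nonneg _ _).trans hA')
      _ = 1 / (s * t) := one_div_mul_one_div s t
  exact (sCount_le_iff ⟨_, h_comp⟩).2 h_comp

end ApproximationNumbers

section OrthogonalProjection

variable {𝕜 F : Type*} [RCLike 𝕜] [NormedAddCommGroup F] [InnerProductSpace 𝕜 F]

lemma norm_sub_starProjection_le (V : Submodule 𝕜 F) [V.HasOrthogonalProjection] (x : F) {v : F}
    (hv : v ∈ V) : ‖x - V.starProjection x‖ ≤ ‖x - v‖ := by
  rw [V.starProjection_minimal x]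
  exact ciInf_le (f := fun w : V => ‖x - w‖)
    ⟨0, Set.forall_mem_range.2 fun _ => norm_nonneg _⟩ ⟨v, hv⟩

variable (𝕜) in
lemma exists_finiteDimensional_norm_sub_starProjection_le {s : Set F} (hs : TotallyBounded s)
    {ε : ℝ} (hε : 0 < ε) :
    ∃ (V : Submodule 𝕜 F) (_ : FiniteDimensional 𝕜 V), ∀ x ∈ s, ‖x - V.starProjection x‖ ≤ ε := by
  obtain ⟨net, h_fin, h_cover⟩ := Metric.totallyBounded_iff.1 hs ε hε
  have : FiniteDimensional 𝕜 (Submodule.span 𝕜 net) := FiniteDimensional.span_of_finite 𝕜 h_fin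
  refine ⟨Submodule.span 𝕜 net, this, fun x hx => ?_⟩
  obtain ⟨y, hy, hxy⟩ := Set.mem_iUnion₂.1 (h_cover hx)
  rw [Metric.mem_ball, dist_eq_norm] at hxy
  exact (norm_sub_starProjection_le _ x (Submodule.subset_span hy)).trans hxy.le

end OrthogonalProjection

section Compact

variable {E F : Type*} [NormedAddCommGroup E] [NormedSpace ℂ E]
  [NormedAddCommGroup F] [InnerProductSpace ℂ F]

lemma sVal_finrank_le_norm_sub_starProjection_comp (A : E →L[ℂ] F) (V : Submodule ℂ F)
    [FiniteDimensional ℂ V] :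
    sVal A (Module.finrank ℂ V) ≤ ‖A - V.starProjection.comp A‖ := by
  refine sVal_le_norm_sub A ?_
  rw [Module.finrank_eq_rank]
  refine Submodule.rank_mono ?_
  rintro _ ⟨x, rfl⟩
  exact V.starProjection_apply_mem (A x)

lemma exists_sVal_le_of_isCompactOperator {A : E →L[ℂ] F} (hA : IsCompactOperator A) {ε : ℝ}
    (hε : 0 < ε) : ∃ k, sVal A k ≤ ε := by
  have h_bdd : TotallyBounded (A '' Metric.closedBall 0 1) :=
    (hA.isCompact_closure_image_closedBall (f := (A : E →ₗ[ℂ] F)) 1).totallyBounded.subset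
      subset_closure
  obtain ⟨V, _, hV⟩ := exists_finiteDimensional_norm_sub_starProjection_le ℂ h_bdd hε
  refine ⟨Module.finrank ℂ V, (sVal_finrank_le_norm_sub_starProjection_comp A V).trans ?_⟩
  refine ContinuousLinearMap.opNorm_le_of_unit_norm hε.le fun x hx => ?_
  exact hV (A x) (Set.mem_image_of_mem A (mem_closedBall_zero_iff.2 hx.le))

lemma tendsto_sVal_of_isCompactOperator {A : E →L[ℂ] F} (hA : IsCompactOperator A) :
    Tendsto (sVal A) atTop (𝓝 0) := by
  refine tendsto_order.2 ⟨fun c hc => .of_forall fun k => hc.trans_le (sVal_nonneg A k),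
    fun c hc => ?_⟩
  obtain ⟨k, hk⟩ := exists_sVal_le_of_isCompactOperator hA (half_pos hc)
  filter_upwards [eventually_ge_atTop k] with n hn
  exact ((sVal_antitone A hn).trans hk).trans_lt (half_lt_self hc)

end Compact

lemma isBigO_comp_rpow {E : Type*} [Norm E] {f : ℝ → E} {q r : ℝ}
    (hf : f =O[atTop] fun t => t ^ q) (hr : 0 < r) :
    (fun t => f (t ^ r)) =O[atTop] fun t => t ^ (r * q) := by
  refine (hf.comp_tendsto (tendsto_rpow_atTop hr)).trans_eventuallyEq ?_
  filter_upwards [eventually_ge_atTop 0] with t ht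
  exact (Real.rpow_mul ht r q).symm

theorem sCount_comp_bigO_general
    {E F K : Type*} [NormedAddCommGroup E] [NormedAddCommGroup F] [NormedAddCommGroup K]
    [NormedSpace ℂ E] [NormedSpace ℂ F] [NormedSpace ℂ K]
    {A : E →L[ℂ] F} {B : F →L[ℂ] K}
    (hA₀ : Tendsto (sVal A) atTop (𝓝 0)) (hB₀ : Tendsto (sVal B) atTop (𝓝 0))
    {p₁ p₂ p : ℝ} (hp₁ : 0 < p₁) (hp₂ : 0 < p₂) (hp : 1 / p = 1 / p₁ + 1 / p₂)
    (hA : (fun t : ℝ => (sCount A t : ℝ)) =O[atTop] fun t => t ^ p₁)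
    (hB : (fun t : ℝ => (sCount B t : ℝ)) =O[atTop] fun t => t ^ p₂) :
    (fun t : ℝ => (sCount (B.comp A) t : ℝ)) =O[atTop] fun t => t ^ p := by
  have hp_pos : 0 < p := one_div_pos.1 (hp ▸ by positivity)
  have h_split : p / p₁ + p / p₂ = 1 := by
    rw [div_eq_mul_one_div p p₁, div_eq_mul_one_div p p₂, ← mul_add, ← hp,
      mul_one_div_cancel hp_pos.ne']
  have hA' := isBigO_comp_rpow hA (div_pos hp_pos hp₁)
  have hB' := isBigO_comp_rpow hB (div_pos hp_pos hp₂)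
  rw [div_mul_cancel₀ p hp₁.ne'] at hA'
  rw [div_mul_cancel₀ p hp₂.ne'] at hB'
  refine IsBigO.trans (.of_norm_eventuallyLE ?_) (hA'.add hB')
  filter_upwards [eventually_gt_atTop 0] with t ht
  have h_le : sCount (B.comp A) (t ^ (p / p₁) * t ^ (p / p₂)) ≤
      sCount A (t ^ (p / p₁)) + sCount B (t ^ (p / p₂)) :=
    sCount_comp_mul_le (hA₀.eventually_le_const (by positivity)).exists
      (hB₀.eventually_le_const (by positivity)).exists
  rw [← Real.rpow_add ht, h_split, Real.rpow_one] at h_le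
  rw [Real.norm_natCast]
  exact_mod_cast h_le

/-- Composition rule for counting functions of singular values. -/
theorem sCount_comp_bigO
    {H₁ H₂ H₃ : Type*}
    [NormedAddCommGroup H₁] [InnerProductSpace ℂ H₁] [CompleteSpace H₁]
    [NormedAddCommGroup H₂] [InnerProductSpace ℂ H₂] [CompleteSpace H₂]
    [NormedAddCommGroup H₃] [InnerProductSpace ℂ H₃] [CompleteSpace H₃]
    (A : H₁ →L[ℂ] H₂) (B : H₂ →L[ℂ] H₃)
    (hAc : IsCompactOperator (⇑A)) (hBc : IsCompactOperator (⇑B))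
    (p₁ p₂ p : ℝ) (hp₁ : 0 < p₁) (hp₂ : 0 < p₂) (hp : 1/p = 1/p₁ + 1/p₂)
    (hA : (fun t : ℝ => (sCount A t : ℝ)) =O[atTop] fun t => t ^ p₁)
    (hB : (fun t : ℝ => (sCount B t : ℝ)) =O[atTop] fun t => t ^ p₂) :
    (fun t : ℝ => (sCount (B.comp A) t : ℝ)) =O[atTop] fun t => t ^ p :=
  sCount_comp_bigO_general (tendsto_sVal_of_isCompactOperator hAc)
    (tendsto_sVal_of_isCompactOperator hBc) hp₁ hp₂ hp hA hB
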